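/- arXiv:1002.2982 — 3 statements merged into one kernel-verified Lean document; each statement's English description precedes it below -/
import Mathlib

section
/- Let n ≥ 1, r > 0, ε > 0, and let f : B_r(0) ⊆ ℝⁿ → ℝ be a smooth function with f(0) = 0, Df(0) = 0, and A := −(1/2)·D²f(0) satisfying ⟨x, Ax⟩ ≥ (ε/2)‖x‖² for all x ∈ ℝⁿ. Let (q_m) ⊆ B_r(0) converge to 0 and let (s_m) be positive reals converging to 0 such that |f(q_m)| ≤ s_m for all m. Then limsup_{m→∞} ‖q_m‖²/s_m ≤ 2/ε. In particular the rescaled points q̂_m := q_m/√s_m are bounded and admit a subsequence converging to some q̂₀ ∈ ℝⁿ with ⟨q̂₀, A q̂₀⟩ ≤ 1. -/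
open scoped RealInnerProductSpace
open Metric Filter Topology

theorem taylor_aux {E : Type*} [NormedAddCommGroup E] [NormedSpace ℝ E] (f : E → ℝ)
    (hf : ContDiffAt ℝ 2 f 0) (hf0 : f 0 = 0) (hDf : fderiv ℝ f 0 = 0) (c : ℝ) (hc : 0 < c) :
    ∀ᶠ x in 𝓝 (0 : E), |f x - 1 / 2 * iteratedFDeriv ℝ 2 f 0 ![x, x]| ≤ c * ‖x‖ ^ 2 := by
  have hd : ∀ᶠ x in 𝓝 (0 : E), DifferentiableAt ℝ f x :=
    (hf.eventually (by simp)).mono fun x hx => hx.differentiableAt (by simp)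
  have h2 : DifferentiableAt ℝ (fderiv ℝ f) 0 :=
    (hf.fderiv_right (m := 1) (by norm_num)).differentiableAt (by simp)
  have ho := h2.hasFDerivAt.isLittleO.def hc
  obtain ⟨δ, hδ, hb⟩ := Metric.eventually_nhds_iff_ball.1 (hd.and ho)
  refine Metric.eventually_nhds_iff_ball.2 ⟨δ, hδ, fun x hx => ?_⟩
  set L := fderiv ℝ (fderiv ℝ f) 0 with hL
  have hmem : ∀ t ∈ Set.Icc (0 : ℝ) 1, t • x ∈ ball (0 : E) δ := by
    intro t ht
    simp only [mem_ball_zero_iff, norm_smul, Real.norm_eq_abs, abs_of_nonneg ht.1] at hx ⊢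
    nlinarith [norm_nonneg x, ht.2]
  have hder : ∀ t ∈ Set.Icc (0 : ℝ) 1,
      HasDerivWithinAt (fun t : ℝ => f (t • x) - t ^ 2 / 2 * L x x)
        (fderiv ℝ f (t • x) x - t * L x x) (Set.Icc 0 1) t := by
    intro t ht
    have h1 : HasDerivAt (fun t : ℝ => t • x) x t := by
      simpa using (hasDerivAt_id t).smul_const x
    have h3 := (hb _ (hmem t ht)).1.hasFDerivAt.comp_hasDerivAt t h1
    have h4 : HasDerivAt (fun t : ℝ => t ^ 2 / 2 * L x x) (t * L x x) t := by
      have := (((hasDerivAt_id t).pow 2).div_const 2).mul_const (L x x)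
      refine this.congr_deriv ?_
      simp
    exact (h3.sub h4).hasDerivWithinAt
  have hbd : ∀ t ∈ Set.Icc (0 : ℝ) 1, ‖fderiv ℝ f (t • x) x - t * L x x‖ ≤ c * ‖x‖ ^ 2 := by
    intro t ht
    have h5 := (hb _ (hmem t ht)).2
    rw [hDf, sub_zero, sub_zero] at h5
    have h6 := (fderiv ℝ f (t • x) - L (t • x)).le_of_opNorm_le h5 x
    have h7 : (fderiv ℝ f (t • x) - L (t • x)) x = fderiv ℝ f (t • x) x - t * L x x := by
      simp
    rw [h7] at h6
    refine h6.trans ?_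
    rw [norm_smul, Real.norm_eq_abs, abs_of_nonneg ht.1]
    have : t * (c * ‖x‖ ^ 2) ≤ 1 * (c * ‖x‖ ^ 2) :=
      mul_le_mul_of_nonneg_right ht.2 (by positivity)
    nlinarith
  have h8 := (convex_Icc (0 : ℝ) 1).norm_image_sub_le_of_norm_hasDerivWithin_le hder hbd
    (Set.left_mem_Icc.2 zero_le_one) (Set.right_mem_Icc.2 zero_le_one)
  rw [iteratedFDeriv_two_apply]
  simpa [hf0] using h8

/-- Let `f : B_r(0) ⊆ ℝⁿ → ℝ` be smooth with `f(0) = 0`, `Df(0) = 0`,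
and `A := -(1/2)·D²f(0)` satisfying `⟪x, A x⟫ ≥ (ε/2)‖x‖²`.  If `q_m → 0` in `B_r(0)`,
`s_m > 0` tends to `0`, and `|f(q_m)| ≤ s_m`, then `limsup ‖q_m‖²/s_m ≤ 2/ε`; in
particular the rescaled points `q̂_m = q_m/√s_m` are bounded and admit a subsequence
converging to some `q̂₀` with `⟪q̂₀, A q̂₀⟫ ≤ 1`. -/
theorem parabolic_rescaled_points_bounded (n : ℕ) (hn : 1 ≤ n) (r ε : ℝ)
    (hr : 0 < r) (hε : 0 < ε)
    (f : EuclideanSpace ℝ (Fin n) → ℝ)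
    (hf : ContDiffOn ℝ (⊤ : ℕ∞) f (ball 0 r))
    (hf0 : f 0 = 0) (hDf : fderiv ℝ f 0 = 0)
    (A : EuclideanSpace ℝ (Fin n) →ₗ[ℝ] EuclideanSpace ℝ (Fin n))
    (hA : ∀ x y : EuclideanSpace ℝ (Fin n),
      ⟪x, A y⟫ = -(1 / 2) * iteratedFDeriv ℝ 2 f 0 ![x, y])
    (hAε : ∀ x : EuclideanSpace ℝ (Fin n), ε / 2 * ‖x‖ ^ 2 ≤ ⟪x, A x⟫)
    (q : ℕ → EuclideanSpace ℝ (Fin n)) (hqmem : ∀ m, q m ∈ ball (0 : EuclideanSpace ℝ (Fin n)) r)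
    (hq0 : Tendsto q atTop (𝓝 0))
    (s : ℕ → ℝ) (hs : ∀ m, 0 < s m) (hs0 : Tendsto s atTop (𝓝 0))
    (hfq : ∀ m, |f (q m)| ≤ s m) :
    Filter.limsup (fun m => ‖q m‖ ^ 2 / s m) atTop ≤ 2 / ε ∧
      (∃ C : ℝ, ∀ m, ‖(Real.sqrt (s m))⁻¹ • q m‖ ≤ C) ∧
      ∃ (ψ : ℕ → ℕ) (q₀ : EuclideanSpace ℝ (Fin n)), StrictMono ψ ∧
        Tendsto (fun m => (Real.sqrt (s (ψ m)))⁻¹ • q (ψ m)) atTop (𝓝 q₀) ∧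
        ⟪q₀, A q₀⟫ ≤ 1 := by
  have hfa : ContDiffAt ℝ 2 f 0 :=
    ((hf.contDiffAt (ball_mem_nhds 0 hr)).of_le (by
      have h : (2 : ℕ∞) ≤ ⊤ := le_top
      exact WithTop.coe_le_coe.2 h))
  have key : ∀ c > 0, ∀ᶠ m in atTop, ⟪q m, A (q m)⟫ ≤ s m + c * ‖q m‖ ^ 2 := by
    intro c hc
    filter_upwards [hq0.eventually (taylor_aux f hfa hf0 hDf c hc)] with m hm
    have h1 := (abs_le.1 hm).1
    have h2 := (abs_le.1 hm).2
    have h3 := (abs_le.1 (hfq m)).1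
    rw [hA]
    linarith
  have hev : ∀ b > 2 / ε, ∀ᶠ m in atTop, ‖q m‖ ^ 2 / s m ≤ b := by
    intro b hb
    have hb0 : 0 < b := lt_trans (by positivity) hb
    have hc : 0 < ε / 2 - 1 / b := by
      have : 1 / b < ε / 2 := by
        rw [gt_iff_lt, div_lt_iff₀ hε] at hb
        rw [div_lt_iff₀ hb0]; linarith
      linarith
    filter_upwards [key _ hc] with m hm
    have h1 := hAε (q m)
    have h2 : 1 / b * ‖q m‖ ^ 2 ≤ s m := by linarith
    rw [div_le_iff₀ (hs m)]
    rw [one_div, inv_mul_le_iff₀ hb0] at h2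
    exact h2
  have hnorm : ∀ m, ‖(Real.sqrt (s m))⁻¹ • q m‖ ^ 2 = ‖q m‖ ^ 2 / s m := by
    intro m
    rw [norm_smul, mul_pow, norm_inv, Real.norm_eq_abs, inv_pow, sq_abs, Real.sq_sqrt (hs m).le]
    ring
  have hbdd : ∃ C : ℝ, ∀ m, ‖(Real.sqrt (s m))⁻¹ • q m‖ ≤ C := by
    have hB : IsBoundedUnder (· ≤ ·) atTop (fun m => ‖q m‖ ^ 2 / s m) :=
      ⟨2 / ε + 1, by simpa using hev (2 / ε + 1) (by linarith)⟩
    obtain ⟨D, hD⟩ := hB.bddAbove_range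
    refine ⟨Real.sqrt D, fun m => ?_⟩
    apply Real.le_sqrt_of_sq_le
    rw [hnorm]
    exact hD ⟨m, rfl⟩
  refine ⟨?_, hbdd, ?_⟩
  · refine le_of_forall_gt_imp_ge_of_dense fun b hb => ?_
    refine limsup_le_of_le ?_ (hev b hb)
    refine IsBoundedUnder.isCoboundedUnder_le ⟨0, ?_⟩
    simp only [eventually_map]
    exact Eventually.of_forall fun m => div_nonneg (by positivity) (hs m).le
  · obtain ⟨C, hC⟩ := hbdd
    obtain ⟨q₀, -, ψ, hψ, hlim⟩ := tendsto_subseq_of_bounded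
      (isBounded_closedBall (x := (0 : EuclideanSpace ℝ (Fin n))) (r := C))
      (x := fun m => (Real.sqrt (s m))⁻¹ • q m) (fun m => by simpa using hC m)
    refine ⟨ψ, q₀, hψ, hlim, ?_⟩
    have hAc : Continuous A := A.continuous_of_finiteDimensional
    have hcont : Continuous fun x : EuclideanSpace ℝ (Fin n) => ⟪x, A x⟫ :=
      continuous_id.inner hAc
    have hl := (hcont.tendsto q₀).comp hlim
    have hle : ∀ c > 0, ⟪q₀, A q₀⟫ ≤ 1 + c * C ^ 2 := by
      intro c hc
      refine le_of_tendsto hl ?_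
      filter_upwards [hψ.tendsto_atTop.eventually (key c hc)] with m hm
      have hsm := hs (ψ m)
      have h1 : ⟪(Real.sqrt (s (ψ m)))⁻¹ • q (ψ m), A ((Real.sqrt (s (ψ m)))⁻¹ • q (ψ m))⟫
          = ⟪q (ψ m), A (q (ψ m))⟫ / s (ψ m) := by
        rw [map_smul, real_inner_smul_left, real_inner_smul_right, ← mul_assoc, ← mul_inv,
          Real.mul_self_sqrt hsm.le]
        ring
      have h2 : ‖q (ψ m)‖ ^ 2 / s (ψ m) ≤ C ^ 2 := by
        rw [← hnorm]
        exact pow_le_pow_left₀ (norm_nonneg _) (hC _) 2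
      simp only [Function.comp_apply]
      rw [h1, div_le_iff₀ hsm]
      rw [div_le_iff₀ hsm] at h2
      nlinarith
    have hc0 : Tendsto (fun c : ℝ => 1 + c * C ^ 2) (𝓝[>] 0) (𝓝 1) := by
      have : Continuous fun c : ℝ => 1 + c * C ^ 2 := by fun_prop
      simpa using (this.tendsto 0).mono_left nhdsWithin_le_nhds
    exact ge_of_tendsto hc0 (eventually_mem_nhdsWithin.mono fun c hc => hle c hc)
end

section
/- Let n ≥ 1, r > 0, C > 0. Let (s_m) be positive reals converging to 0, let (q_m) ⊆ ℝⁿ be such that q̂_m := q_m/√s_m converges to some q̂₀ ∈ ℝⁿ, and let (B_m) be symmetric n×n real matrices converging to a symmetric matrix B₀. For each m let φ_m : B_r(0) ⊆ ℝⁿ → ℝ be a function satisfying φ_m(x) = s_m + ⟨x − q_m, B_m (x − q_m)⟩ + R_m(x) with |R_m(x)| ≤ C‖x‖³ for all x ∈ B_r(0). Define φ̂_m(x) = φ_m(√s_m·x)/s_m for ‖x‖ < r/√s_m. Then φ̂_m converges uniformly on every compact subset of ℝⁿ to the paraboloid function φ̂₀(x) := 1 + ⟨x − q̂₀, B₀ (x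 − q̂₀)⟩. -/
open scoped RealInnerProductSpace
open Metric Filter Topology

/-- Parabolic limit of tangent geodesic hyperplanes.  Suppose
`s_m > 0` tends to `0`, the rescaled base points `q̂_m = q_m/√s_m` converge to `q̂₀`,
symmetric operators `B_m` converge to `B₀`, and
`φ_m(x) = s_m + ⟪x - q_m, B_m (x - q_m)⟫ + R_m(x)` with `|R_m(x)| ≤ C‖x‖³` on `B_r(0)`.
Then `φ̂_m(x) = φ_m(√s_m·x)/s_m` converges uniformly on every compact set to the
paraboloid `φ̂₀(x) = 1 + ⟪x - q̂₀, B₀ (x - q̂₀)⟫`. -/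
theorem parabolic_limit_of_tangent_hyperplanes (n : ℕ) (hn : 1 ≤ n) (r C : ℝ)
    (hr : 0 < r) (hC : 0 < C)
    (s : ℕ → ℝ) (hs : ∀ m, 0 < s m) (hs0 : Tendsto s atTop (𝓝 0))
    (q : ℕ → EuclideanSpace ℝ (Fin n)) (q₀ : EuclideanSpace ℝ (Fin n))
    (hq : Tendsto (fun m => (Real.sqrt (s m))⁻¹ • q m) atTop (𝓝 q₀))
    (B : ℕ → EuclideanSpace ℝ (Fin n) →ₗ[ℝ] EuclideanSpace ℝ (Fin n))
    (B₀ : EuclideanSpace ℝ (Fin n) →ₗ[ℝ] EuclideanSpace ℝ (Fin n))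
    (hBsymm : ∀ m, ∀ x y : EuclideanSpace ℝ (Fin n), ⟪B m x, y⟫ = ⟪x, B m y⟫)
    (hB₀symm : ∀ x y : EuclideanSpace ℝ (Fin n), ⟪B₀ x, y⟫ = ⟪x, B₀ y⟫)
    (hB : ∀ x : EuclideanSpace ℝ (Fin n), Tendsto (fun m => B m x) atTop (𝓝 (B₀ x)))
    (φ : ℕ → EuclideanSpace ℝ (Fin n) → ℝ)
    (hφ : ∀ m, ∀ x ∈ ball (0 : EuclideanSpace ℝ (Fin n)) r,
      |φ m x - (s m + ⟪x - q m, B m (x - q m)⟫)| ≤ C * ‖x‖ ^ 3) :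
    ∀ Q : Set (EuclideanSpace ℝ (Fin n)), IsCompact Q →
      ∀ ε : ℝ, 0 < ε → ∃ N : ℕ, ∀ m ≥ N, ∀ x ∈ Q,
        |φ m (Real.sqrt (s m) • x) / s m - (1 + ⟪x - q₀, B₀ (x - q₀)⟫)| < ε := by
  intro Q hQ ε hε
  have hsq : Tendsto (fun m => Real.sqrt (s m)) atTop (𝓝 0) := by
    simpa using hs0.sqrt
  have key : ∀ x ∈ Q, {p : ℕ × EuclideanSpace ℝ (Fin n) |
      |φ p.1 (Real.sqrt (s p.1) • p.2) / s p.1 - (1 + ⟪p.2 - q₀, B₀ (p.2 - q₀)⟫)| < ε}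
        ∈ (atTop : Filter ℕ) ×ˢ 𝓝 x := by
    intro x _
    have h1 : Tendsto (fun p : ℕ × EuclideanSpace ℝ (Fin n) => p.1) (atTop ×ˢ 𝓝 x) atTop := tendsto_fst
    have h2 : Tendsto (fun p : ℕ × EuclideanSpace ℝ (Fin n) => p.2) (atTop ×ˢ 𝓝 x) (𝓝 x) := tendsto_snd
    have hsq1 := hsq.comp h1
    have hv : Tendsto (fun p : ℕ × EuclideanSpace ℝ (Fin n) => p.2 - (Real.sqrt (s p.1))⁻¹ • q p.1)
        (atTop ×ˢ 𝓝 x) (𝓝 (x - q₀)) := h2.sub (hq.comp h1)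
    have expand : ∀ (A : EuclideanSpace ℝ (Fin n) →ₗ[ℝ] EuclideanSpace ℝ (Fin n)) (v : EuclideanSpace ℝ (Fin n)),
        A v = ∑ i, v i • A (EuclideanSpace.basisFun (Fin n) ℝ i) := by
      intro A v
      conv_lhs => rw [← (EuclideanSpace.basisFun (Fin n) ℝ).sum_repr v]
      simp
    have hBv : Tendsto (fun p : ℕ × EuclideanSpace ℝ (Fin n) => B p.1 (p.2 - (Real.sqrt (s p.1))⁻¹ • q p.1))
        (atTop ×ˢ 𝓝 x) (𝓝 (B₀ (x - q₀))) := by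
      rw [expand B₀]
      simp_rw [fun p : ℕ × EuclideanSpace ℝ (Fin n) => expand (B p.1) (p.2 - (Real.sqrt (s p.1))⁻¹ • q p.1)]
      refine tendsto_finsetSum _ fun i _ => ?_
      refine Tendsto.smul ?_ ((hB _).comp h1)
      exact ((EuclideanSpace.proj (𝕜 := ℝ) i).continuous.tendsto (x - q₀)).comp hv
    have hin := hv.inner (𝕜 := ℝ) hBv
    have hB0c : Continuous B₀ := B₀.continuous_of_finiteDimensional
    have hlim : Tendsto (fun p : ℕ × EuclideanSpace ℝ (Fin n) => ⟪p.2 - q₀, B₀ (p.2 - q₀)⟫)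
        (atTop ×ˢ 𝓝 x) (𝓝 ⟪x - q₀, B₀ (x - q₀)⟫) := by
      have : Continuous (fun y : EuclideanSpace ℝ (Fin n) => ⟪y - q₀, B₀ (y - q₀)⟫) := by fun_prop
      exact (this.tendsto x).comp h2
    have hb : Tendsto (fun p : ℕ × EuclideanSpace ℝ (Fin n) => C * (Real.sqrt (s p.1) * ‖p.2‖ ^ 3) +
        |⟪p.2 - (Real.sqrt (s p.1))⁻¹ • q p.1, B p.1 (p.2 - (Real.sqrt (s p.1))⁻¹ • q p.1)⟫
          - ⟪p.2 - q₀, B₀ (p.2 - q₀)⟫|) (atTop ×ˢ 𝓝 x) (𝓝 0) := by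
      have := ((hsq1.mul (h2.norm.pow 3)).const_mul C).add (hin.sub hlim).abs
      simpa using this
    have hball : Tendsto (fun p : ℕ × EuclideanSpace ℝ (Fin n) => Real.sqrt (s p.1) • p.2)
        (atTop ×ˢ 𝓝 x) (𝓝 0) := by
      simpa using hsq1.smul h2
    filter_upwards [hb.eventually (gt_mem_nhds hε), hball.eventually (ball_mem_nhds 0 hr)]
      with p hp hpb
    refine lt_of_le_of_lt ?_ hp
    obtain ⟨m, y⟩ := p
    simp only at hpb ⊢
    have h := hφ m _ hpb
    have hspos := hs m
    have hσ : 0 < Real.sqrt (s m) := Real.sqrt_pos.2 hspos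
    have hσ2 : Real.sqrt (s m) ^ 2 = s m := Real.sq_sqrt hspos.le
    set σ := Real.sqrt (s m)
    have e1 : σ • y - q m = σ • (y - σ⁻¹ • q m) := by
      rw [smul_sub, smul_inv_smul₀ hσ.ne']
    rw [e1, map_smul, real_inner_smul_left, real_inner_smul_right, norm_smul,
      Real.norm_of_nonneg hσ.le] at h
    set I := ⟪y - σ⁻¹ • q m, B m (y - σ⁻¹ • q m)⟫
    set J := ⟪y - q₀, B₀ (y - q₀)⟫
    have h3 : |φ m (σ • y) / s m - (1 + I)| ≤ C * (σ * ‖y‖ ^ 3) := by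
      have : φ m (σ • y) / s m - (1 + I) = (φ m (σ • y) - (s m + σ * (σ * I))) / s m := by
        rw [← hσ2]; field_simp
      rw [this, abs_div, abs_of_pos hspos, div_le_iff₀ hspos]
      refine h.trans (le_of_eq ?_)
      rw [← hσ2]; ring
    calc _ = |(φ m (σ • y) / s m - (1 + I)) + (I - J)| := by congr 1; ring
      _ ≤ _ := (abs_add_le _ _).trans (by gcongr)
  have h := hQ.mem_prod_nhdsSet_of_forall key
  obtain ⟨U, hU, V, hV, hUV⟩ := mem_prod_iff.1 h
  obtain ⟨N, hN⟩ := mem_atTop_sets.1 hU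
  exact ⟨N, fun m hm x hx => hUV (Set.mk_mem_prod (hN m hm) (subset_of_mem_nhdsSet hV hx))⟩
end

section
/- Let d ≥ 1, let K₀ ⊆ ℝ^d be a compact convex set with nonempty interior, and let K ⊆ ℝ^d be a set such that ∂K₀ ⊆ K and K ∩ int(K₀) = ∅. Suppose K is semi-convex relative to K₀, i.e. every closed segment [p, q] with endpoints p, q ∈ K and [p, q] ∩ int(K₀) = ∅ satisfies [p, q] ⊆ K. Then K₀ ∪ K is a convex subset of ℝ^d. -/
theorem semiconvex_aux {E : Type*} [NormedAddCommGroup E] [NormedSpace ℝ E] (K₀ K : Set E)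
    (hcl : IsClosed K₀) (hconv : Convex ℝ K₀) (hfr : frontier K₀ ⊆ K)
    (hsemi : ∀ p ∈ K, ∀ q ∈ K,
      segment ℝ p q ∩ interior K₀ = ∅ → segment ℝ p q ⊆ K)
    (p w z : E) (hp : p ∈ K₀ ∪ K) (hw : w ∈ interior K₀) (hz : z ∈ segment ℝ p w)
    (hz0 : z ∉ K₀) : z ∈ K := by
  have hpi : p ∉ interior K₀ := fun h =>
    hz0 (interior_subset (hconv.interior.segment_subset h hw hz))
  have hpK : p ∈ K := hp.elim (fun h => hfr (hcl.frontier_eq ▸ ⟨h, hpi⟩)) id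
  obtain ⟨y, hy, hyf⟩ : (segment ℝ z w ∩ frontier K₀).Nonempty := by
    by_contra hne
    rw [Set.not_nonempty_iff_eq_empty] at hne
    have hc : IsPreconnected (segment ℝ z w) := (convex_segment z w).isPreconnected
    obtain ⟨x, hx, hx1, hx2⟩ := hc (interior K₀) K₀ᶜ isOpen_interior hcl.isOpen_compl
      (fun x hx => by
        by_contra hcon
        simp only [Set.mem_union, Set.mem_compl_iff, not_or, not_not] at hcon
        have : x ∈ segment ℝ z w ∩ frontier K₀ := ⟨hx, hcl.frontier_eq ▸ ⟨hcon.2, hcon.1⟩⟩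
        simp [hne] at this)
      ⟨w, right_mem_segment ℝ z w, hw⟩ ⟨z, left_mem_segment ℝ z w, hz0⟩
    exact hx2 (interior_subset hx1)
  have hyi : y ∉ interior K₀ := fun h => hyf.2 h
  rw [mem_segment_iff_wbtw] at hz hy
  have h1 : Wbtw ℝ p y w := hz.trans_right hy
  have h2 : Wbtw ℝ p z y := hz.trans_right_left hy
  refine hsemi p hpK y (hfr hyf) ?_ (mem_segment_iff_wbtw.2 h2)
  rw [Set.eq_empty_iff_forall_notMem]
  rintro u ⟨hu, hui⟩
  rw [mem_segment_iff_wbtw] at hu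
  exact hyi (hconv.interior.segment_subset hui hw
    (mem_segment_iff_wbtw.2 (h1.trans_left_right hu)))

/-- Let `K₀ ⊆ ℝ^d` be a compact convex set with nonempty interior,
and let `K` be a set containing `∂K₀` and disjoint from `int K₀` which is semi-convex
relative to `K₀`: every closed segment with endpoints in `K` avoiding `int K₀` lies in
`K`.  Then `K₀ ∪ K` is convex. -/
theorem semiconvex_union_convex (d : ℕ) (hd : 1 ≤ d)
    (K₀ K : Set (EuclideanSpace ℝ (Fin d)))
    (hK₀cpt : IsCompact K₀) (hK₀conv : Convex ℝ K₀) (hK₀int : (interior K₀).Nonempty)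
    (hfr : frontier K₀ ⊆ K) (hdisj : K ∩ interior K₀ = ∅)
    (hsemi : ∀ p ∈ K, ∀ q ∈ K,
      segment ℝ p q ∩ interior K₀ = ∅ → segment ℝ p q ⊆ K) :
    Convex ℝ (K₀ ∪ K) := by
  have hcl := hK₀cpt.isClosed
  rw [convex_iff_segment_subset]
  intro p hp q hq z hz
  by_cases hz0 : z ∈ K₀
  · exact Or.inl hz0
  right
  by_cases hne : segment ℝ p q ∩ interior K₀ = ∅
  · have key : ∀ x ∈ K₀ ∪ K, x ∈ segment ℝ p q → x ∈ K := fun x hx hxs =>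
      hx.elim (fun h => hfr (hcl.frontier_eq ▸ ⟨h, fun hi => by
        have : x ∈ segment ℝ p q ∩ interior K₀ := ⟨hxs, hi⟩
        simp [hne] at this⟩)) id
    exact hsemi p (key p hp (left_mem_segment ℝ p q)) q (key q hq (right_mem_segment ℝ p q)) hne hz
  · obtain ⟨w, hw, hwi⟩ := Set.nonempty_iff_ne_empty.2 hne
    have hsplit : z ∈ segment ℝ p w ∨ z ∈ segment ℝ q w := by
      rw [segment_eq_image_lineMap] at hw hz
      obtain ⟨s, hs, rfl⟩ := hw
      obtain ⟨t, ht, rfl⟩ := hz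
      simp only [mem_segment_iff_wbtw]
      rcases le_total t s with h | h
      · left
        have : Wbtw ℝ (0:ℝ) t s := by
          rw [← mem_segment_iff_wbtw, segment_eq_Icc hs.1]; exact ⟨ht.1, h⟩
        simpa using this.map (AffineMap.lineMap p q : ℝ →ᵃ[ℝ] _)
      · right
        have : Wbtw ℝ s t (1:ℝ) := by
          rw [← mem_segment_iff_wbtw, segment_eq_Icc hs.2]; exact ⟨h, ht.2⟩
        simpa using (this.map (AffineMap.lineMap p q : ℝ →ᵃ[ℝ] _)).symm
    rcases hsplit with h | h
    · exact semiconvex_aux K₀ K hcl hK₀conv hfr hsemi p w z hp hwi h hz0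
    · exact semiconvex_aux K₀ K hcl hK₀conv hfr hsemi q w z hq hwi h hz0
end
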